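/- arXiv:2107.07277 — 5 statements merged into one kernel-verified Lean document; each statement's English description precedes it below -/
import Mathlib

section
/- Suppose there exist matrices E, H ∈ ℝ^{n×n} with E ≻ 0 and H ≻ 0, S ∈ ℝ^{m×m} and G ∈ ℝ^{m×n} such that M(E,S,G,H) ⪰ 0. Then, setting P = E⁻¹, K = G E⁻¹, Γ = H⁻¹ and D = S, the quadratic dissipation (strict passivity) inequality holds: for all x ∈ ℝⁿ and v ∈ ℝ^m, ((A+BK)x+Fv)ᵀP((A+BK)x+Fv) − xᵀPx ≤ vᵀ(Cx+Dv) − xᵀΓx. (Paper's Lemma 1.) -/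
open Matrix

/-- The 4×4 block matrix M(E,S,G,H) from the paper's Lemma 1. -/
noncomputable def Mblock {n m : ℕ} (A : Matrix (Fin n) (Fin n) ℝ) (B F : Matrix (Fin n) (Fin m) ℝ)
    (C : Matrix (Fin m) (Fin n) ℝ)
    (E : Matrix (Fin n) (Fin n) ℝ) (S : Matrix (Fin m) (Fin m) ℝ)
    (G : Matrix (Fin m) (Fin n) ℝ) (H : Matrix (Fin n) (Fin n) ℝ) :
    Matrix ((Fin n ⊕ Fin m) ⊕ (Fin n ⊕ Fin n)) ((Fin n ⊕ Fin m) ⊕ (Fin n ⊕ Fin n)) ℝ :=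
  Matrix.fromBlocks
    (Matrix.fromBlocks E ((1 / 2 : ℝ) • (E * Cᵀ)) ((1 / 2 : ℝ) • (C * E))
      ((1 / 2 : ℝ) • (S + Sᵀ)))
    (Matrix.fromBlocks (A * E + B * G)ᵀ E Fᵀ 0)
    (Matrix.fromBlocks (A * E + B * G) F E 0)
    (Matrix.fromBlocks E 0 0 H)

/-- Paper's Lemma 1: feasibility of the LMI M(E,S,G,H) ⪰ 0 (with E ≻ 0, H ≻ 0)
implies the strict passivity (quadratic dissipation) inequality with
P = E⁻¹, K = G E⁻¹, Γ = H⁻¹ and D = S. -/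
theorem stmt0 (n m : ℕ)
    (A : Matrix (Fin n) (Fin n) ℝ) (B F : Matrix (Fin n) (Fin m) ℝ)
    (C : Matrix (Fin m) (Fin n) ℝ)
    (E H : Matrix (Fin n) (Fin n) ℝ) (S : Matrix (Fin m) (Fin m) ℝ)
    (G : Matrix (Fin m) (Fin n) ℝ)
    (hE : E.PosDef) (hH : H.PosDef)
    (hM : (Mblock A B F C E S G H).PosSemidef) :
    ∀ (x : Fin n → ℝ) (v : Fin m → ℝ),
      ((A + B * (G * E⁻¹)) *ᵥ x + F *ᵥ v) ⬝ᵥ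
          (E⁻¹ *ᵥ ((A + B * (G * E⁻¹)) *ᵥ x + F *ᵥ v)) -
        x ⬝ᵥ (E⁻¹ *ᵥ x) ≤
      v ⬝ᵥ (C *ᵥ x + S *ᵥ v) - x ⬝ᵥ (H⁻¹ *ᵥ x) := by
  intro x v
  have hEu : IsUnit E.det := (Matrix.isUnit_iff_isUnit_det E).1 hE.isUnit
  have hHu : IsUnit H.det := (Matrix.isUnit_iff_isUnit_det H).1 hH.isUnit
  have hEt : Eᵀ = E := by simpa using hE.isHermitian.eq
  have hK : (A + B * (G * E⁻¹)) *ᵥ x = (A * E + B * G) *ᵥ (E⁻¹ *ᵥ x) := by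
    rw [Matrix.mulVec_mulVec, Matrix.add_mul, Matrix.mul_assoc A, Matrix.mul_nonsing_inv E hEu,
      Matrix.mul_one, Matrix.mul_assoc B]
  rw [hK]
  set N := A * E + B * G with hN
  obtain ⟨y, hy⟩ : ∃ y, y = E⁻¹ *ᵥ x := ⟨_, rfl⟩
  have hx : E *ᵥ y = x := by
    rw [hy, Matrix.mulVec_mulVec, Matrix.mul_nonsing_inv E hEu, Matrix.one_mulVec]
  rw [← hy]
  obtain ⟨w, hw⟩ : ∃ w, w = N *ᵥ y + F *ᵥ v := ⟨_, rfl⟩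
  rw [← hw]
  obtain ⟨p, hp⟩ : ∃ p, p = E⁻¹ *ᵥ w := ⟨_, rfl⟩
  have hpw : E *ᵥ p = w := by
    rw [hp, Matrix.mulVec_mulVec, Matrix.mul_nonsing_inv E hEu, Matrix.one_mulVec]
  obtain ⟨q, hq⟩ : ∃ q, q = H⁻¹ *ᵥ x := ⟨_, rfl⟩
  have hqx : H *ᵥ q = x := by
    rw [hq, Matrix.mulVec_mulVec, Matrix.mul_nonsing_inv H hHu, Matrix.one_mulVec]
  rw [← hp, ← hq]
  have key := hM.dotProduct_mulVec_nonneg (Sum.elim (Sum.elim y v) (Sum.elim (-p) (-q)))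
  have tr : ∀ {a b : ℕ} (X : Matrix (Fin a) (Fin b) ℝ) (s : Fin b → ℝ) (t : Fin a → ℝ),
      s ⬝ᵥ (Xᵀ *ᵥ t) = t ⬝ᵥ (X *ᵥ s) := by
    intro a b X s t
    rw [Matrix.mulVec_transpose, dotProduct_comm, Matrix.dotProduct_mulVec]
  have hyE : ∀ z, y ⬝ᵥ (E *ᵥ z) = z ⬝ᵥ x := by
    intro z
    rw [← hx, ← tr E, hEt]
  have hNt := tr N y p
  have hFt := tr F v p
  have hSt := tr S v v
  have hCt := tr C x v
  have hpp : p ⬝ᵥ w = p ⬝ᵥ (N *ᵥ y) + p ⬝ᵥ (F *ᵥ v) := by rw [hw, dotProduct_add]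
  simp only [Mblock, ← hN, star_trivial, Matrix.fromBlocks_mulVec, Sum.elim_comp_inl,
    Sum.elim_comp_inr, sumElim_dotProduct_sumElim, Matrix.smul_mulVec, Matrix.add_mulVec,
    Matrix.mulVec_neg, dotProduct_add, dotProduct_neg, neg_dotProduct, dotProduct_smul,
    Matrix.zero_mulVec, dotProduct_zero, smul_eq_mul, ← Matrix.mulVec_mulVec, hx, hpw, hqx,
    hyE, hNt, hFt, hSt, Matrix.fromBlocks_mulVec, Sum.elim_add_add] at key
  rw [dotProduct_comm (Cᵀ *ᵥ v) x, hCt] at key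
  simp only [dotProduct_add]
  rw [dotProduct_comm w p, dotProduct_comm x y, dotProduct_comm x q]
  linarith
end

section
/- Let P, Γ ∈ ℝ^{n×n} with P ≻ 0 and Γ ≻ 0, K ∈ ℝ^{m×n}, D ∈ ℝ^{m×m}. Then the symmetric block matrix [[P − (A+BK)ᵀP(A+BK) − Γ, ½Cᵀ − (A+BK)ᵀPF], [½C − FᵀP(A+BK), ½(D+Dᵀ) − FᵀPF]] is positive semidefinite if and only if M(P⁻¹, D, K P⁻¹, Γ⁻¹) is positive semidefinite. (The chain of congruence and Schur-complement equivalences in the proof of Lemma 1.) -/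
open Matrix

/-- The chain of congruence and Schur-complement equivalences in the proof of Lemma 1:
for P ≻ 0 and Γ ≻ 0, the 2×2 passivity block matrix is PSD iff
M(P⁻¹, D, K P⁻¹, Γ⁻¹) is PSD. -/
theorem stmt2 (n m : ℕ)
    (A : Matrix (Fin n) (Fin n) ℝ) (B F : Matrix (Fin n) (Fin m) ℝ)
    (C : Matrix (Fin m) (Fin n) ℝ)
    (P Γ : Matrix (Fin n) (Fin n) ℝ) (K : Matrix (Fin m) (Fin n) ℝ)
    (D : Matrix (Fin m) (Fin m) ℝ)
    (hP : P.PosDef) (hΓ : Γ.PosDef) :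
    (Matrix.fromBlocks
      (P - (A + B * K)ᵀ * P * (A + B * K) - Γ)
      ((1 / 2 : ℝ) • Cᵀ - (A + B * K)ᵀ * P * F)
      ((1 / 2 : ℝ) • C - Fᵀ * P * (A + B * K))
      ((1 / 2 : ℝ) • (D + Dᵀ) - Fᵀ * P * F)).PosSemidef ↔
    (Mblock A B F C P⁻¹ D (K * P⁻¹) Γ⁻¹).PosSemidef := by
  have hPi := hP.inv
  have hΓi := hΓ.inv
  have uP : IsUnit P.det := (Matrix.isUnit_iff_isUnit_det _).1 hP.isUnit
  have uΓ : IsUnit Γ.det := (Matrix.isUnit_iff_isUnit_det _).1 hΓ.isUnit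
  have hPt : Pᵀ = P := by simpa [Matrix.IsHermitian] using hP.1
  have hPit : (P⁻¹)ᵀ = P⁻¹ := by rw [Matrix.transpose_nonsing_inv, hPt]
  have e1 : P * P⁻¹ = 1 := Matrix.mul_nonsing_inv _ uP
  have e2 : P⁻¹ * P = 1 := Matrix.nonsing_inv_mul _ uP
  have g1 : Γ * Γ⁻¹ = 1 := Matrix.mul_nonsing_inv _ uΓ
  have g2 : Γ⁻¹ * Γ = 1 := Matrix.nonsing_inv_mul _ uΓ
  have hl : Matrix.fromBlocks P⁻¹ 0 0 Γ⁻¹ * Matrix.fromBlocks P 0 0 Γ = 1 := by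
    simp [Matrix.fromBlocks_multiply, e2, g2]
  have hinv : (Matrix.fromBlocks P⁻¹ 0 0 Γ⁻¹)⁻¹ = Matrix.fromBlocks P 0 0 Γ :=
    Matrix.inv_eq_right_inv hl
  let : Invertible (Matrix.fromBlocks P⁻¹ 0 0 Γ⁻¹) := invertibleOfRightInverse _ _ hl
  let : Invertible P⁻¹ := invertibleOfRightInverse _ _ e2
  have hD : (Matrix.fromBlocks P⁻¹ 0 0 Γ⁻¹).PosDef := by
    have h1 : (Matrix.fromBlocks P⁻¹ 0 0 Γ⁻¹).PosSemidef := by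
      have := (Matrix.PosDef.fromBlocks₁₁ (0 : Matrix (Fin n) (Fin n) ℝ) Γ⁻¹ hPi).2
        (by simpa using hΓi.posSemidef)
      simpa using this
    exact h1.posDef_iff_isUnit.2 (isUnit_of_invertible _)
  let T : Matrix (Fin n ⊕ Fin m) (Fin n ⊕ Fin m) ℝ := Matrix.fromBlocks P⁻¹ 0 0 1
  have hT : IsUnit T := by
    have : T * Matrix.fromBlocks P 0 0 1 = 1 := by
      simp [T, Matrix.fromBlocks_multiply, e2]
    let := invertibleOfRightInverse _ _ this
    exact isUnit_of_invertible _
  have key := Matrix.PosDef.fromBlocks₂₂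
    (Matrix.fromBlocks P⁻¹ ((1 / 2 : ℝ) • (P⁻¹ * Cᵀ)) ((1 / 2 : ℝ) • (C * P⁻¹))
      ((1 / 2 : ℝ) • (D + Dᵀ)))
    (Matrix.fromBlocks (A * P⁻¹ + B * (K * P⁻¹))ᵀ P⁻¹ Fᵀ 0) hD
  have hB : (Matrix.fromBlocks (A * P⁻¹ + B * (K * P⁻¹))ᵀ P⁻¹ Fᵀ (0 : Matrix (Fin m) (Fin n) ℝ))ᴴ
      = Matrix.fromBlocks (A * P⁻¹ + B * (K * P⁻¹)) F P⁻¹ 0 := by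
    simp only [Matrix.conjTranspose_eq_transpose_of_trivial, Matrix.fromBlocks_transpose,
      Matrix.transpose_transpose, hPit, Matrix.transpose_zero]
  rw [hB, hinv] at key
  unfold Mblock
  rw [key, ← Matrix.IsUnit.posSemidef_star_left_conjugate_iff hT]
  have hL : A * P⁻¹ + B * (K * P⁻¹) = (A + B * K) * P⁻¹ := by
    rw [Matrix.add_mul, Matrix.mul_assoc]
  rw [hL]
  generalize A + B * K = L
  have hTs : star T = T := by
    simp only [T, Matrix.star_eq_conjTranspose, Matrix.conjTranspose_eq_transpose_of_trivial,
      Matrix.fromBlocks_transpose, hPit, Matrix.transpose_zero, Matrix.transpose_one]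
  rw [hTs]
  refine iff_of_eq (congrArg _ ?_)
  simp only [T, Matrix.fromBlocks_multiply, sub_eq_add_neg, Matrix.fromBlocks_neg,
    Matrix.fromBlocks_add]
  congr 1 <;>
    simp [Matrix.mul_assoc, e1, hPit, Matrix.transpose_mul,
      Matrix.add_mul, Matrix.mul_add, add_comm]
  abel
end

section
/- Let P, Γ ∈ ℝ^{n×n} with P ≻ 0 and Γ symmetric, and K ∈ ℝ^{m×n}. If the symmetric block matrix obtained by setting D = 0, namely [[P − (A+BK)ᵀP(A+BK) − Γ, ½Cᵀ − (A+BK)ᵀPF], [½C − FᵀP(A+BK), −FᵀPF]], is positive semidefinite, then F = 0 and C = 0. (The paper's claim that passivity with respect to the actual output y = Cx is impossible unless the subsystems are decoupled, which motivates the virtual output.) -/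
open Matrix

/-- If the passivity block matrix with D = 0, namely
[[P − (A+BK)ᵀP(A+BK) − Γ, ½Cᵀ − (A+BK)ᵀPF], [½C − FᵀP(A+BK), −FᵀPF]],
is positive semidefinite (with P ≻ 0, Γ symmetric), then F = 0 and C = 0:
passivity with respect to the actual output is impossible unless the
subsystems are decoupled. -/
theorem stmt3 (n m : ℕ)
    (A : Matrix (Fin n) (Fin n) ℝ) (B F : Matrix (Fin n) (Fin m) ℝ)
    (C : Matrix (Fin m) (Fin n) ℝ)
    (P Γ : Matrix (Fin n) (Fin n) ℝ) (K : Matrix (Fin m) (Fin n) ℝ)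
    (hP : P.PosDef) (hΓ : Γ.IsSymm)
    (hPSD : (Matrix.fromBlocks
      (P - (A + B * K)ᵀ * P * (A + B * K) - Γ)
      ((1 / 2 : ℝ) • Cᵀ - (A + B * K)ᵀ * P * F)
      ((1 / 2 : ℝ) • C - Fᵀ * P * (A + B * K))
      (-(Fᵀ * P * F))).PosSemidef) :
    F = 0 ∧ C = 0 := by
  have hF : F = 0 := by
    apply Matrix.ext_of_mulVec_single
    intro i
    rw [Matrix.zero_mulVec]
    by_contra hne
    have h1 := hP.dotProduct_mulVec_pos hne
    have h2 := hPSD.dotProduct_mulVec_nonneg (Sum.elim 0 (Pi.single i 1))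
    have h3 : (Pi.single i 1 : Fin m → ℝ) ⬝ᵥ ((Fᵀ * P * F) *ᵥ Pi.single i 1)
        = (F *ᵥ Pi.single i 1) ⬝ᵥ (P *ᵥ (F *ᵥ Pi.single i 1)) := by
      rw [Matrix.mul_assoc, ← Matrix.mulVec_mulVec, Matrix.dotProduct_mulVec,
        Matrix.vecMul_transpose, ← Matrix.mulVec_mulVec]
    rw [star_trivial, Matrix.fromBlocks_mulVec, sumElim_dotProduct_sumElim] at h2
    simp only [Sum.elim_comp_inl, Sum.elim_comp_inr, Matrix.mulVec_zero, zero_add,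
      zero_dotProduct, Matrix.neg_mulVec, dotProduct_neg, h3] at h2
    rw [star_trivial] at h1
    linarith
  refine ⟨hF, ?_⟩
  subst hF
  rw [← Matrix.transpose_eq_zero]
  apply Matrix.ext_of_mulVec_single
  intro i
  have h := (hPSD.dotProduct_mulVec_zero_iff (Sum.elim 0 (Pi.single i 1))).1 (by
    rw [star_trivial, Matrix.fromBlocks_mulVec, sumElim_dotProduct_sumElim]
    simp only [Sum.elim_comp_inl, Sum.elim_comp_inr, Matrix.mulVec_zero]
    simp)
  rw [Matrix.fromBlocks_mulVec] at h
  simp only [Sum.elim_comp_inl, Sum.elim_comp_inr, Matrix.mulVec_zero] at h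
  ext j
  have hj := congrFun h (Sum.inl j)
  simpa using hj
end

section
/- Suppose for each i ∈ {1,…,M} there exist P_i ≻ 0 and symmetric Γ_i ∈ ℝ^{n_i×n_i} such that for all x_i ∈ ℝ^{n_i}, v_i ∈ ℝ^q: ((A_i+B_iK_i)x_i+F_iv_i)ᵀP_i((A_i+B_iK_i)x_i+F_iv_i) − x_iᵀP_ix_i ≤ v_iᵀ(C_ix_i+D_iv_i) − x_iᵀΓ_ix_i. Let Γ = blockdiag(Γ_1,…,Γ_M) and suppose ½(D+Dᵀ) ≻ 0, ε₀ > 0, and the symmetric block matrix [[Γ − ε₀I_n + CᵀL̃C, CᵀL̃ᵀ], [L̃C, (½(D+Dᵀ))⁻¹]] is positive semidefinite. Then the global closed-loop system x⁺ = (Ā − F̄L̃C)x is asymptotically stable: for every x₀ ∈ ℝⁿ, (Ā − F̄L̃C)ᵏx₀ → 0 as k → ∞. (Paper's Lemma 2.) -/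
open Matrix Filter

/-- L̃ = L ⊗ I_q, viewed as a block matrix indexed by the sigma type Σ _ : Fin M, Fin q:
its (i,j) block is l_ij I_q. -/
def Ltilde {M q : ℕ} (L : Matrix (Fin M) (Fin M) ℝ) :
    Matrix (Σ _ : Fin M, Fin q) (Σ _ : Fin M, Fin q) ℝ :=
  fun a b => L a.1 b.1 * (if a.2 = b.2 then 1 else 0)

lemma aux_bd {M : ℕ} {m n : Fin M → ℕ} (A : ∀ i, Matrix (Fin (m i)) (Fin (n i)) ℝ)
    (x : (Σ i, Fin (n i)) → ℝ) (i : Fin M) :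
    (fun a => (Matrix.blockDiagonal' A *ᵥ x) ⟨i, a⟩) = A i *ᵥ (fun j => x ⟨i, j⟩) := by
  funext a
  simp only [Matrix.mulVec, dotProduct, Fintype.sum_sigma]
  rw [Finset.sum_eq_single i]
  · simp [Matrix.blockDiagonal'_apply_eq]
  · intro j _ hj
    apply Finset.sum_eq_zero
    intro k _
    rw [Matrix.blockDiagonal'_apply_ne _ _ _ (Ne.symm hj), zero_mul]
  · simp

lemma aux_dot {M : ℕ} {n : Fin M → ℕ} (x y : (Σ i, Fin (n i)) → ℝ) :
    x ⬝ᵥ y = ∑ i, (fun j => x ⟨i, j⟩) ⬝ᵥ (fun j => y ⟨i, j⟩) := by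
  simp only [dotProduct, Fintype.sum_sigma]

lemma aux_tendsto {ι : Type*} [Fintype ι] [DecidableEq ι] (T : Matrix ι ι ℝ)
    (V : (ι → ℝ) → ℝ) (hV : ∀ x, 0 ≤ V x) (ε : ℝ) (hε : 0 < ε)
    (h : ∀ x, V (T *ᵥ x) - V x ≤ - (ε * (x ⬝ᵥ x))) (x₀ : ι → ℝ) :
    Tendsto (fun k : ℕ => (T ^ k) *ᵥ x₀) atTop (nhds 0) := by
  have hb : ∀ N : ℕ, ∑ k ∈ Finset.range N, ε * (((T ^ k) *ᵥ x₀) ⬝ᵥ ((T ^ k) *ᵥ x₀))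
      ≤ V x₀ - V ((T ^ N) *ᵥ x₀) := by
    intro N
    induction N with
    | zero => simp
    | succ N ih =>
      rw [Finset.sum_range_succ]
      have := h ((T ^ N) *ᵥ x₀)
      rw [Matrix.mulVec_mulVec, ← pow_succ'] at this
      linarith
  have hnn : ∀ y : ι → ℝ, 0 ≤ y ⬝ᵥ y := fun y =>
    Finset.sum_nonneg (fun i _ => mul_self_nonneg (y i))
  have hs : Summable (fun k : ℕ => ε * (((T ^ k) *ᵥ x₀) ⬝ᵥ ((T ^ k) *ᵥ x₀))) := by
    apply summable_of_sum_range_le (c := V x₀)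
    · intro k
      exact mul_nonneg hε.le (hnn _)
    · intro N
      have := hb N
      have := hV ((T ^ N) *ᵥ x₀)
      linarith
  have ht := hs.tendsto_atTop_zero.const_mul ε⁻¹
  rw [mul_zero] at ht
  have ht2 : Tendsto (fun k : ℕ => Real.sqrt (((T ^ k) *ᵥ x₀) ⬝ᵥ ((T ^ k) *ᵥ x₀)))
      atTop (nhds 0) := by
    have := ht.sqrt
    rw [Real.sqrt_zero] at this
    refine this.congr (fun k => ?_)
    rw [inv_mul_cancel_left₀ hε.ne']
  rw [tendsto_pi_nhds]
  intro i
  refine squeeze_zero_norm (fun k => ?_) ht2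
  rw [Real.norm_eq_abs]
  apply Real.abs_le_sqrt
  rw [pow_two]
  exact Finset.single_le_sum (f := fun i => ((T ^ k) *ᵥ x₀) i * ((T ^ k) *ᵥ x₀) i)
    (fun i _ => mul_self_nonneg _) (Finset.mem_univ i)

lemma aux_lmi {ι κ : Type*} [Fintype ι] [DecidableEq ι] [Fintype κ] [DecidableEq κ]
    (G : Matrix ι ι ℝ) (C : Matrix κ ι ℝ) (Lt D : Matrix κ κ ℝ) (ε : ℝ)
    (hD : ((1 / 2 : ℝ) • (D + Dᵀ)).PosDef)
    (hL : (Matrix.fromBlocks (G - ε • (1 : Matrix ι ι ℝ) + Cᵀ * Lt * C) (Cᵀ * Ltᵀ) (Lt * C)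
      (((1 / 2 : ℝ) • (D + Dᵀ))⁻¹)).PosSemidef) (x : ι → ℝ) (v : κ → ℝ)
    (hv : v = - ((Lt * C) *ᵥ x)) :
    v ⬝ᵥ (C *ᵥ x + D *ᵥ v) - x ⬝ᵥ (G *ᵥ x) ≤ - (ε * (x ⬝ᵥ x)) := by
  set S := (1 / 2 : ℝ) • (D + Dᵀ) with hS
  have hdet : IsUnit S.det := hD.det_pos.ne'.isUnit
  have hSv : v ⬝ᵥ (S *ᵥ v) = v ⬝ᵥ (D *ᵥ v) := by
    have : v ⬝ᵥ (Dᵀ *ᵥ v) = v ⬝ᵥ (D *ᵥ v) := by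
      rw [Matrix.mulVec_transpose, dotProduct_comm, Matrix.dotProduct_mulVec]
    rw [hS, Matrix.smul_mulVec, Matrix.add_mulVec, dotProduct_smul, dotProduct_add, this,
      smul_eq_mul]
    ring
  have h := hL.dotProduct_mulVec_nonneg (Sum.elim x (S *ᵥ v))
  have hw : (Lt * C) *ᵥ x = -v := by rw [hv, neg_neg]
  have h1 : x ⬝ᵥ ((Cᵀ * Ltᵀ) *ᵥ (S *ᵥ v)) = - (v ⬝ᵥ (S *ᵥ v)) := by
    rw [← Matrix.transpose_mul, Matrix.mulVec_transpose, dotProduct_comm,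
      ← Matrix.dotProduct_mulVec, hw, dotProduct_neg, dotProduct_comm]
  have h2 : x ⬝ᵥ ((Cᵀ * Lt * C) *ᵥ x) = - (v ⬝ᵥ (C *ᵥ x)) := by
    rw [Matrix.mul_assoc, ← Matrix.mulVec_mulVec, hw, Matrix.mulVec_transpose, dotProduct_comm,
      ← Matrix.dotProduct_mulVec, neg_dotProduct]
  have h3 : S⁻¹ *ᵥ (S *ᵥ v) = v := by
    rw [Matrix.mulVec_mulVec, Matrix.nonsing_inv_mul _ hdet, Matrix.one_mulVec]
  have h4 : (S *ᵥ v) ⬝ᵥ v = v ⬝ᵥ (S *ᵥ v) := dotProduct_comm _ _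
  rw [star_trivial, Matrix.fromBlocks_mulVec, sumElim_dotProduct_sumElim] at h
  simp only [Sum.elim_comp_inl, Sum.elim_comp_inr, Matrix.add_mulVec, Matrix.sub_mulVec,
    dotProduct_add, dotProduct_sub, h1, h2, h3, hw, Matrix.smul_mulVec, Matrix.one_mulVec,
    dotProduct_smul, smul_eq_mul, dotProduct_neg, h4] at h
  rw [dotProduct_add, ← hSv]
  linarith

/-- Paper's Lemma 2: if every subsystem is strictly passive w.r.t. (v_i, z_i) and the
LMI [[Γ − ε₀I + CᵀL̃C, CᵀL̃ᵀ], [L̃C, (½(D+Dᵀ))⁻¹]] ⪰ 0 holds with ½(D+Dᵀ) ≻ 0 and ε₀ > 0,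
then the global closed loop x⁺ = (Ā − F̄L̃C)x is asymptotically stable. -/
theorem stmt7 (M q : ℕ) (n : Fin M → ℕ)
    (A : ∀ i, Matrix (Fin (n i)) (Fin (n i)) ℝ)
    (B F : ∀ i, Matrix (Fin (n i)) (Fin q) ℝ)
    (C : ∀ i, Matrix (Fin q) (Fin (n i)) ℝ)
    (K : ∀ i, Matrix (Fin q) (Fin (n i)) ℝ)
    (D : Fin M → Matrix (Fin q) (Fin q) ℝ)
    (P Γ : ∀ i, Matrix (Fin (n i)) (Fin (n i)) ℝ)
    (hP : ∀ i, (P i).PosDef) (hΓsym : ∀ i, (Γ i).IsSymm)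
    (hdiss : ∀ i (x : Fin (n i) → ℝ) (v : Fin q → ℝ),
      ((A i + B i * K i) *ᵥ x + F i *ᵥ v) ⬝ᵥ
          (P i *ᵥ ((A i + B i * K i) *ᵥ x + F i *ᵥ v)) -
        x ⬝ᵥ (P i *ᵥ x) ≤
      v ⬝ᵥ (C i *ᵥ x + D i *ᵥ v) - x ⬝ᵥ (Γ i *ᵥ x))
    (L : Matrix (Fin M) (Fin M) ℝ) (ε₀ : ℝ) (hε₀ : 0 < ε₀)
    (hDpos : ((1 / 2 : ℝ) •
      (Matrix.blockDiagonal' D + (Matrix.blockDiagonal' D)ᵀ)).PosDef)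
    (hLMI : (Matrix.fromBlocks
      (Matrix.blockDiagonal' Γ -
        ε₀ • (1 : Matrix (Σ i, Fin (n i)) (Σ i, Fin (n i)) ℝ) +
        (Matrix.blockDiagonal' C)ᵀ * Ltilde (q := q) L * Matrix.blockDiagonal' C)
      ((Matrix.blockDiagonal' C)ᵀ * (Ltilde (q := q) L)ᵀ)
      (Ltilde (q := q) L * Matrix.blockDiagonal' C)
      (((1 / 2 : ℝ) •
        (Matrix.blockDiagonal' D + (Matrix.blockDiagonal' D)ᵀ))⁻¹)).PosSemidef) :
    ∀ x₀ : (Σ i, Fin (n i)) → ℝ,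
      Tendsto (fun k : ℕ =>
        ((Matrix.blockDiagonal' (fun i => A i + B i * K i) -
          Matrix.blockDiagonal' F * Ltilde (q := q) L * Matrix.blockDiagonal' C) ^ k) *ᵥ x₀)
        atTop (nhds 0) := by
  set T := Matrix.blockDiagonal' (fun i => A i + B i * K i) -
          Matrix.blockDiagonal' F * Ltilde (q := q) L * Matrix.blockDiagonal' C with hT
  refine aux_tendsto T
    (fun x => ∑ i, (fun j => x ⟨i, j⟩) ⬝ᵥ (P i *ᵥ (fun j => x ⟨i, j⟩))) ?_ ε₀ hε₀ ?_
  · intro x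
    refine Finset.sum_nonneg (fun i _ => ?_)
    have := (hP i).posSemidef.dotProduct_mulVec_nonneg (fun j => x ⟨i, j⟩)
    rwa [star_trivial] at this
  · intro x
    obtain ⟨v, hv⟩ : ∃ v, v = - ((Ltilde (q := q) L * Matrix.blockDiagonal' C) *ᵥ x) := ⟨_, rfl⟩
    refine le_trans ?_ (aux_lmi _ _ _ _ ε₀ hDpos hLMI x v hv)
    have hTx : T *ᵥ x = Matrix.blockDiagonal' (fun i => A i + B i * K i) *ᵥ x
        + Matrix.blockDiagonal' F *ᵥ v := by
      rw [hT, hv, Matrix.sub_mulVec, Matrix.mulVec_neg, Matrix.mulVec_mulVec, Matrix.mul_assoc,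
        sub_eq_add_neg]
    have hTi : ∀ i, (fun j => (T *ᵥ x) ⟨i, j⟩) =
        (A i + B i * K i) *ᵥ (fun j => x ⟨i, j⟩) + F i *ᵥ (fun j => v ⟨i, j⟩) := by
      intro i
      rw [hTx, ← aux_bd (fun i => A i + B i * K i) x i, ← aux_bd F v i]
      rfl
    rw [aux_dot, aux_dot, ← Finset.sum_sub_distrib, ← Finset.sum_sub_distrib]
    refine Finset.sum_le_sum (fun i _ => ?_)
    have := hdiss i (fun j => x ⟨i, j⟩) (fun j => v ⟨i, j⟩)
    rw [← hTi, ← aux_bd Γ x i, ← aux_bd C x i, ← aux_bd D v i] at this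
    exact this
end

section
/- Assume L̃ ⪰ 0 and fix ε₀ > 0. Suppose for each i ∈ {1,…,M} there exist E_i ∈ ℝ^{n_i×n_i} with E_i ≻ 0, a diagonal positive-definite H_i ∈ ℝ^{n_i×n_i}, a diagonal positive-definite S_i ∈ ℝ^{q×q}, and G_i ∈ ℝ^{q×n_i} such that: (i) M_i(E_i,S_i,G_i,H_i) ⪰ 0, where M_i is built from A_i, B_i, F_i, C_i; (ii) [H_i]_j ≤ 1/(|W_i|_j + ε₀) for all j ∈ {1,…,n_i}; (iii) [S_i]_k ≤ 1/|U_i|_k for all k ∈ {1,…,q} with |U_i|_k > 0. Then the decentralized control gains K_i = G_iE_i⁻¹ with D_i = S_i render the global closed loop asymptotically stable: for every x₀ ∈ ℝⁿ, (Ā − F̄L̃C)ᵏx₀ → 0 as k → ∞. (Paper's Theorem 1.) -/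
open Matrix Filter

theorem aux_local {n m : ℕ} (A : Matrix (Fin n) (Fin n) ℝ)
    (B F : Matrix (Fin n) (Fin m) ℝ) (C : Matrix (Fin m) (Fin n) ℝ)
    (E : Matrix (Fin n) (Fin n) ℝ) (S : Matrix (Fin m) (Fin m) ℝ)
    (G : Matrix (Fin m) (Fin n) ℝ) (H : Matrix (Fin n) (Fin n) ℝ)
    (hE : E.PosDef) (hH : H.PosDef ∧ H.IsDiag) (hS : S.IsDiag)
    (hM : (Mblock A B F C E S G H).PosSemidef)
    (x y : Fin n → ℝ) (v : Fin m → ℝ)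
    (hy : y = (A + B * (G * E⁻¹)) *ᵥ x + F *ᵥ v) :
    y ⬝ᵥ (E⁻¹ *ᵥ y) ≤ x ⬝ᵥ (E⁻¹ *ᵥ x) + v ⬝ᵥ (C *ᵥ x) + ∑ k, S k k * v k ^ 2
      - ∑ j, x j ^ 2 / H j j := by
  have hdet : IsUnit E.det := (Matrix.isUnit_iff_isUnit_det _).1 hE.isUnit
  have hEt : Eᵀ = E := by simpa using hE.isHermitian.eq
  have hHd : H = diagonal (fun j => H j j) := hH.2.diagonal_diag.symm
  have hSd : S = diagonal (fun j => S j j) := hS.diagonal_diag.symm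
  have hpos : ∀ j, 0 < H j j := fun j => hH.1.diag_pos
  obtain ⟨a, ha⟩ : ∃ a, a = E⁻¹ *ᵥ x := ⟨_, rfl⟩
  obtain ⟨b, hb⟩ : ∃ b, b = E⁻¹ *ᵥ y := ⟨_, rfl⟩
  have hEa : E *ᵥ a = x := by rw [ha, mulVec_mulVec, mul_nonsing_inv _ hdet, one_mulVec]
  have hEb : E *ᵥ b = y := by rw [hb, mulVec_mulVec, mul_nonsing_inv _ hdet, one_mulVec]
  have hy' : (A * E + B * G) *ᵥ a + F *ᵥ v = y := by
    rw [hy, add_mulVec, add_mulVec, ← mulVec_mulVec, hEa, ha]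
    simp only [mulVec_mulVec, Matrix.mul_assoc]
  obtain ⟨N, hN⟩ : ∃ N, N = A * E + B * G := ⟨_, rfl⟩
  rw [← hN] at hy'
  let z : Fin n → ℝ := fun j => -(x j / H j j)
  have h := hM.dotProduct_mulVec_nonneg (Sum.elim (Sum.elim a v) (Sum.elim (-b) z))
  have e1 : a ⬝ᵥ (Nᵀ *ᵥ b) = b ⬝ᵥ (N *ᵥ a) := by
    rw [mulVec_transpose, dotProduct_comm, ← dotProduct_mulVec]
  have e2 : v ⬝ᵥ (Fᵀ *ᵥ b) = b ⬝ᵥ (F *ᵥ v) := by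
    rw [mulVec_transpose, dotProduct_comm, ← dotProduct_mulVec]
  have e3 : a ⬝ᵥ (E *ᵥ z) = z ⬝ᵥ x := by
    rw [← hEa, dotProduct_comm, dotProduct_comm z, ← vecMul_transpose, hEt, ← dotProduct_mulVec,
      dotProduct_comm z, ← vecMul_transpose, hEt, dotProduct_comm]
  have e4 : a ⬝ᵥ ((E * Cᵀ) *ᵥ v) = v ⬝ᵥ (C *ᵥ x) := by
    rw [← hEa, mulVec_mulVec, dotProduct_comm a, ← vecMul_transpose, ← dotProduct_mulVec,
      transpose_mul, hEt, transpose_transpose]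
  have e5 : v ⬝ᵥ ((C * E) *ᵥ a) = v ⬝ᵥ (C *ᵥ x) := by rw [← mulVec_mulVec, hEa]
  have e6 : v ⬝ᵥ (S *ᵥ v) = ∑ k, S k k * v k ^ 2 := by
    rw [hSd]; simp only [dotProduct, mulVec_diagonal, diagonal_apply_eq]
    exact Finset.sum_congr rfl fun k _ => by ring
  have e7 : z ⬝ᵥ (H *ᵥ z) = ∑ j, x j ^ 2 / H j j := by
    rw [hHd]; simp only [dotProduct, mulVec_diagonal, diagonal_apply_eq, z]
    refine Finset.sum_congr rfl fun k _ => ?_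
    have := (hpos k).ne'
    field_simp
  have e8 : z ⬝ᵥ x = - ∑ j, x j ^ 2 / H j j := by
    simp only [dotProduct, z, ← Finset.sum_neg_distrib]
    exact Finset.sum_congr rfl fun k _ => by ring
  have e9 : b ⬝ᵥ (N *ᵥ a) + b ⬝ᵥ (F *ᵥ v) = b ⬝ᵥ y := by rw [← dotProduct_add, hy']
  have hSt : Sᵀ = S := by rw [hSd, diagonal_transpose]
  have hS2 : (1 / 2 : ℝ) • (S + S) = S := by
    rw [← two_smul ℝ S, smul_smul]; norm_num
  simp only [Mblock, ← hN, hSt, hS2, fromBlocks_mulVec, star_trivial, Sum.elim_comp_inl,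
    Sum.elim_comp_inr, sumElim_dotProduct_sumElim, mulVec_neg, smul_mulVec, zero_mulVec,
    dotProduct_add, neg_dotProduct, dotProduct_neg, dotProduct_smul, e1, e2, e3, e4, e5, e6, e7,
    hEa, hEb, e8, add_zero, smul_eq_mul, neg_zero, dotProduct_zero] at h
  have e10 : x ⬝ᵥ a = a ⬝ᵥ x := dotProduct_comm _ _
  have e11 : y ⬝ᵥ b = b ⬝ᵥ y := dotProduct_comm _ _
  rw [← ha, ← hb, e10, e11]
  linarith

theorem aux_slice {M : ℕ} {p r : Fin M → ℕ} (X : ∀ i, Matrix (Fin (p i)) (Fin (r i)) ℝ)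
    (x : (Σ i, Fin (r i)) → ℝ) (i : Fin M) (j : Fin (p i)) :
    (blockDiagonal' X *ᵥ x) ⟨i, j⟩ = (X i *ᵥ fun l => x ⟨i, l⟩) j := by
  simp only [mulVec, dotProduct, Fintype.sum_sigma]
  rw [Finset.sum_eq_single i]
  · simp [blockDiagonal'_apply]
  · intro b _ hb
    refine Finset.sum_eq_zero fun l _ => ?_
    rw [blockDiagonal'_apply_ne _ _ _ hb.symm, zero_mul]
  · simp

theorem aux_lyap {ι : Type*} [Fintype ι] [DecidableEq ι] (T : Matrix ι ι ℝ) (V : (ι → ℝ) → ℝ)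
    (ε : ℝ) (hε : 0 < ε) (hV : ∀ x, 0 ≤ V x)
    (hd : ∀ x, V (T *ᵥ x) ≤ V x - ε * ∑ j, x j ^ 2) (x₀ : ι → ℝ) :
    Tendsto (fun k : ℕ => (T ^ k) *ᵥ x₀) atTop (nhds 0) := by
  have hs : ∀ k, V ((T ^ k) *ᵥ x₀) + ε * ∑ l ∈ Finset.range k, ∑ j, ((T ^ l) *ᵥ x₀) j ^ 2
      ≤ V x₀ := by
    intro k
    induction k with
    | zero => simp
    | succ k ih =>
      have := hd ((T ^ k) *ᵥ x₀)
      rw [mulVec_mulVec, ← pow_succ'] at this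
      rw [Finset.sum_range_succ]
      linarith
  have hsum : Summable (fun l : ℕ => ∑ j, ((T ^ l) *ᵥ x₀) j ^ 2) := by
    refine summable_of_sum_range_le (c := V x₀ / ε)
      (fun l => Finset.sum_nonneg fun j _ => sq_nonneg _) fun k => ?_
    rw [le_div_iff₀ hε]
    linarith [hs k, hV ((T ^ k) *ᵥ x₀)]
  have ht := hsum.tendsto_atTop_zero
  rw [tendsto_pi_nhds]
  intro j
  have h2 : Tendsto (fun l : ℕ => ((T ^ l) *ᵥ x₀) j ^ 2) atTop (nhds 0) :=
    squeeze_zero (fun l => sq_nonneg _) (fun l =>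
      Finset.single_le_sum (f := fun j => ((T ^ l) *ᵥ x₀) j ^ 2)
        (fun j _ => sq_nonneg _) (Finset.mem_univ j)) ht
  have h3 := h2.sqrt
  simp only [Real.sqrt_sq_eq_abs, Real.sqrt_zero] at h3
  exact (tendsto_zero_iff_abs_tendsto_zero _).2 h3

theorem aux_cs {ι : Type*} [Fintype ι] (u x : ι → ℝ) (s : ℝ)
    (hs : 0 < ∑ j, |u j| → s ≤ 1 / ∑ j, |u j|) :
    s * (∑ j, u j * x j) ^ 2 ≤ ∑ j, |u j| * x j ^ 2 := by
  have h0 : 0 ≤ ∑ j, |u j| * x j ^ 2 := Finset.sum_nonneg fun j _ => by positivity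
  have hcs : (∑ j, u j * x j) ^ 2 ≤ (∑ j, |u j|) * ∑ j, |u j| * x j ^ 2 := by
    refine Finset.sum_sq_le_sum_mul_sum_of_sq_le_mul _ (fun j _ => abs_nonneg _)
      (fun j _ => by positivity) fun j _ => ?_
    rw [mul_pow, ← sq_abs (u j)]; exact le_of_eq (by ring)
  rcases (Finset.sum_nonneg fun j _ => abs_nonneg (u j) :
    0 ≤ ∑ j, |u j|).eq_or_lt with h | h
  · rw [← h, zero_mul] at hcs
    have : (∑ j, u j * x j) ^ 2 = 0 := le_antisymm hcs (sq_nonneg _)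
    rw [this, mul_zero]; exact h0
  · calc s * (∑ j, u j * x j) ^ 2 ≤ (1 / ∑ j, |u j|) * (∑ j, u j * x j) ^ 2 := by
          gcongr; exact hs h
      _ ≤ (1 / ∑ j, |u j|) * ((∑ j, |u j|) * ∑ j, |u j| * x j ^ 2) := by gcongr
      _ = _ := by field_simp

/-- Paper's Theorem 1: if L̃ ⪰ 0, ε₀ > 0, and for each subsystem the local constraints
(E_i ≻ 0, H_i and S_i diagonal positive definite, M_i(E_i,S_i,G_i,H_i) ⪰ 0, and the
diagonal bounds [H_i]_j ≤ 1/(|W_i|_j + ε₀) and [S_i]_k ≤ 1/|U_i|_k whenever |U_i|_k > 0)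
are feasible, then the decentralized gains K_i = G_iE_i⁻¹ (with D_i = S_i) render the
global closed loop x⁺ = (Ā − F̄L̃C)x asymptotically stable. -/
theorem stmt8 (M q : ℕ) (n : Fin M → ℕ)
    (A : ∀ i, Matrix (Fin (n i)) (Fin (n i)) ℝ)
    (B F : ∀ i, Matrix (Fin (n i)) (Fin q) ℝ)
    (C : ∀ i, Matrix (Fin q) (Fin (n i)) ℝ)
    (L : Matrix (Fin M) (Fin M) ℝ)
    (hL : (Ltilde (q := q) L).PosSemidef)
    (ε₀ : ℝ) (hε₀ : 0 < ε₀)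
    (E H : ∀ i, Matrix (Fin (n i)) (Fin (n i)) ℝ)
    (S : Fin M → Matrix (Fin q) (Fin q) ℝ)
    (G : ∀ i, Matrix (Fin q) (Fin (n i)) ℝ)
    (hE : ∀ i, (E i).PosDef)
    (hH : ∀ i, (H i).PosDef ∧ (H i).IsDiag)
    (hS : ∀ i, (S i).PosDef ∧ (S i).IsDiag)
    (hM : ∀ i, (Mblock (A i) (B i) (F i) (C i) (E i) (S i) (G i) (H i)).PosSemidef)
    (hHbound : ∀ i (j : Fin (n i)),
      H i j j ≤ 1 / ((∑ k, |((Matrix.blockDiagonal' C)ᵀ * (Ltilde (q := q) L)ᵀ)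
        ⟨i, j⟩ k|) + ε₀))
    (hSbound : ∀ i (k : Fin q),
      0 < (∑ j, |(Ltilde (q := q) L * Matrix.blockDiagonal' C) ⟨i, k⟩ j|) →
      S i k k ≤ 1 / (∑ j, |(Ltilde (q := q) L * Matrix.blockDiagonal' C) ⟨i, k⟩ j|)) :
    ∀ x₀ : (Σ i, Fin (n i)) → ℝ,
      Tendsto (fun k : ℕ =>
        ((Matrix.blockDiagonal' (fun i => A i + B i * (G i * (E i)⁻¹)) -
          Matrix.blockDiagonal' F * Ltilde (q := q) L * Matrix.blockDiagonal' C) ^ k) *ᵥ x₀)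
        atTop (nhds 0) := by
  intro x₀
  refine aux_lyap _ (fun x => ∑ i, (fun j => x ⟨i, j⟩) ⬝ᵥ ((E i)⁻¹ *ᵥ fun j => x ⟨i, j⟩))
    ε₀ hε₀ ?_ ?_ x₀
  · intro x
    refine Finset.sum_nonneg fun i _ => ?_
    simpa using (hE i).inv.posSemidef.dotProduct_mulVec_nonneg (fun j => x ⟨i, j⟩)
  intro x
  set LT := Ltilde (q := q) L with hLT
  set U := LT * blockDiagonal' C with hU
  have hW : (blockDiagonal' C)ᵀ * LTᵀ = Uᵀ := by rw [hU, transpose_mul]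
  simp only [hW, transpose_apply] at hHbound
  set v := -(U *ᵥ x) with hv
  have key := fun i => aux_local (A i) (B i) (F i) (C i) (E i) (S i) (G i) (H i) (hE i) (hH i)
    (hS i).2 (hM i) (fun j => x ⟨i, j⟩)
    (fun j => ((blockDiagonal' (fun i => A i + B i * (G i * (E i)⁻¹)) -
          blockDiagonal' F * LT * blockDiagonal' C) *ᵥ x) ⟨i, j⟩)
    (fun k => v ⟨i, k⟩) (by
      funext j
      have : (blockDiagonal' (fun i => A i + B i * (G i * (E i)⁻¹)) -
          blockDiagonal' F * LT * blockDiagonal' C) *ᵥ x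
          = blockDiagonal' (fun i => A i + B i * (G i * (E i)⁻¹)) *ᵥ x
            + blockDiagonal' F *ᵥ v := by
        rw [sub_mulVec, Matrix.mul_assoc, ← hU, hv, mulVec_neg, mulVec_mulVec, sub_eq_add_neg]
      rw [this, Pi.add_apply, Pi.add_apply, aux_slice, aux_slice (p := n) (r := fun _ => q)])
  have hsum := Finset.sum_le_sum fun i (_ : i ∈ Finset.univ) => key i
  simp only [Finset.sum_sub_distrib, Finset.sum_add_distrib] at hsum
  have t1 : ∑ i, (fun k => v ⟨i, k⟩) ⬝ᵥ (C i *ᵥ fun j => x ⟨i, j⟩) ≤ 0 := by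
    have h1 : ∑ i, (fun k => v ⟨i, k⟩) ⬝ᵥ (C i *ᵥ fun j => x ⟨i, j⟩)
        = v ⬝ᵥ (blockDiagonal' C *ᵥ x) := by
      simp only [dotProduct, Fintype.sum_sigma]
      refine Finset.sum_congr rfl fun i _ => Finset.sum_congr rfl fun k _ => ?_
      rw [aux_slice (p := fun _ => q) (r := n)]
    have h2 := hL.dotProduct_mulVec_nonneg (blockDiagonal' C *ᵥ x)
    rw [star_trivial, mulVec_mulVec, ← hU] at h2
    rw [h1, hv, neg_dotProduct, dotProduct_comm]
    linarith
  have t2 : ∑ i, ∑ k, S i k k * v ⟨i, k⟩ ^ 2 ≤ ∑ a, ∑ b, |U a b| * x b ^ 2 := by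
    rw [Fintype.sum_sigma]
    refine Finset.sum_le_sum fun i _ => Finset.sum_le_sum fun k _ => ?_
    have := aux_cs (fun j => U ⟨i, k⟩ j) x (S i k k) (hSbound i k)
    simpa [hv, mulVec, dotProduct] using this
  have t3 : ∑ a, ∑ b, |U a b| * x b ^ 2 + ε₀ * ∑ b, x b ^ 2
      ≤ ∑ i, ∑ j, x ⟨i, j⟩ ^ 2 / H i j j := by
    rw [Finset.sum_comm, Finset.mul_sum, ← Finset.sum_add_distrib, Fintype.sum_sigma]
    refine Finset.sum_le_sum fun i _ => Finset.sum_le_sum fun j _ => ?_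
    rw [← Finset.sum_mul, ← add_mul, le_div_iff₀ (hH i).1.diag_pos]
    have hb := hHbound i j
    have hp : 0 < (∑ k, |U k ⟨i, j⟩|) + ε₀ :=
      add_pos_of_nonneg_of_pos (Finset.sum_nonneg fun k _ => abs_nonneg _) hε₀
    rw [le_div_iff₀ hp] at hb
    nlinarith [mul_le_mul_of_nonneg_right hb (sq_nonneg (x ⟨i, j⟩))]
  linarith
end
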